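/- Let T be a homeomorphism of a compact metric space X with finite topological entropy h_top(T) < ∞, and fix m ∈ ℕ. Then for every ε > 0 there exist δ ∈ (0,ε) and n₀ ∈ ℕ such that: (1) (1/|F|) log spa(T,F,δ) ≤ C_m(F)·(h_top(T)+ε) for every finite F ⊂ ℤ with m-bounded gaps and |F| ≥ n₀; and (2) (1/|F|) log spa(T,F,δ) ≥ C_m(F)·(h_top(T)−ε) for every finite F ⊂ ℤ. -/

import Mathlib

open Filter

variable {X : Type*} [MetricSpace X]

/-- `spaZ T F ε` : the minimal cardinality of a set `E ⊆ X` such that every `x ∈ X`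
satisfies `max_{i ∈ F} dist (T^i x, T^i e) ≤ ε` for some `e ∈ E`, where the iterates
`T^i`, `i ∈ ℤ`, are powers of the homeomorphism `T`. -/
noncomputable def spaZ (T : X ≃ₜ X) (F : Finset ℤ) (ε : ℝ) : ℕ :=
  sInf {k : ℕ | ∃ E : Finset X, E.card = k ∧
    ∀ x : X, ∃ e ∈ E, ∀ i ∈ F, dist ((T.toEquiv ^ i) x) ((T.toEquiv ^ i) e) ≤ ε}

/-- Topological entropy of a homeomorphism, via spanning sets:
`h_top(T) = lim_{ε→0⁺} limsup_n (1/n) log spa(T,{0,…,n−1},ε)`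
(the limit as `ε → 0⁺` of the antitone-in-`ε` quantity is its supremum over `ε > 0`). -/
noncomputable def htopZ (T : X ≃ₜ X) : EReal :=
  ⨆ (ε : ℝ) (_ : 0 < ε),
    Filter.limsup
      (fun n : ℕ =>
        ((Real.log (spaZ T (Finset.Icc 0 ((n : ℤ) - 1)) ε) / n : ℝ) : EReal))
      Filter.atTop

open Pointwise in
/-- `C_m(F) = |F + {0,…,m−1}| / |F|`. -/
noncomputable def Cm (m : ℕ) (F : Finset ℤ) : ℝ :=
  ((F + Finset.Icc (0 : ℤ) ((m : ℤ) - 1)).card : ℝ) / (F.card : ℝ)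

open Pointwise in
/-- `F` has `m`-bounded gaps if `F + {0,…,m−1}` is an interval of integers. -/
def BoundedGaps (m : ℕ) (F : Finset ℤ) : Prop :=
  ∃ a b : ℤ, F + Finset.Icc (0 : ℤ) ((m : ℤ) - 1) = Finset.Icc a b

open scoped Finset Pointwise Uniformity ENNReal

/-!
Label the points of an orbit by the cells of a partition of diameter at most `s`. If no point of a
set `A` of `(F, s)`-separated points visited the `δ`-boundary of the partition, then a
`(G, δ)`-spanning set would determine the labels over each translate of `G`, and Shearer's
inequality for the translates of `G`, which cover every time in `F` exactly `|G|` times, would give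
`|A| ^ |G| ≤ spa(G, δ) ^ |F - G|`. A pigeonhole over the radii of the balls generating the partition
makes the visits of the boundary rare on average, and an exponential weight charged per visit then
bounds the number of boundary itineraries, at the cost of an error `γ |F| |G|`:
`|G| log spa(F, s) ≤ |F - G| log spa(G, δ) + γ |F| |G|`.
For `F = {0, …, n - 1}` and `n → ∞` this yields `|G| (h_top(T) - ε) ≤ log spa(G, δ)` with `δ`
independent of `G`. The lower bound is the case `G = F + {0, …, m - 1}`, where closeness over `F`
implies closeness over `G` by uniform continuity of finitely many iterates. The upper bound for an
interval is the definition of entropy, and `F` is contained in the interval `F + {0, …, m - 1}`.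
-/

section Shearer

variable {α β κ ι τ : Type*}

theorem card_image_le_card_image [DecidableEq β] [DecidableEq κ] {A : Finset α} {f : α → β}
    {g : α → κ} (h : ∀ x ∈ A, ∀ y ∈ A, g x = g y → f x = f y) : #(A.image f) ≤ #(A.image g) := by
  obtain ⟨B, hBA, hfB, hB⟩ := Finset.exists_subset_injOn_image_eq_of_surjOn (f := f) A (A.image f)
    (by simpa using Set.surjOn_image f A)
  have hgB : Set.InjOn g B := fun x hx y hy hxy ↦ hfB hx hy (h x (hBA hx) y (hBA hy) hxy)
  calc #(A.image f) = #(B.image g) := by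
        rw [← hB, Finset.card_image_of_injOn hfB, Finset.card_image_of_injOn hgB]
    _ ≤ #(A.image g) := Finset.card_le_card (Finset.image_subset_image hBA)

theorem sum_pow_card_le_mul_prod_sum {V : Finset β} {U : Finset τ} (hU : U.Nonempty) {C : ℝ≥0∞}
    {b : β → ℝ≥0∞} {a : β → τ → ℝ≥0∞} (h : ∀ s ∈ V, b s ^ #U ≤ C * ∏ t ∈ U, a s t) :
    (∑ s ∈ V, b s) ^ #U ≤ C * ∏ t ∈ U, ∑ s ∈ V, a s t := by
  have hU₀ : (#U : ℝ) ≠ 0 := by simpa using hU.ne_empty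
  have root_pow (x : ℝ≥0∞) : (x ^ (#U : ℝ)⁻¹) ^ #U = x := by
    rw [← ENNReal.rpow_mul_natCast, inv_mul_cancel₀ hU₀, ENNReal.rpow_one]
  have hroot (s) (hs : s ∈ V) :
      b s ≤ C ^ (#U : ℝ)⁻¹ * ∏ t ∈ U, a s t ^ (#U : ℝ)⁻¹ := by
    rw [ENNReal.prod_rpow_of_nonneg (by positivity),
      ← ENNReal.mul_rpow_of_nonneg _ _ (by positivity), ENNReal.le_rpow_inv_iff (by positivity),
      ENNReal.rpow_natCast]
    exact h s hs
  have holder : ∑ s ∈ V, ∏ t ∈ U, a s t ^ (#U : ℝ)⁻¹ ≤ ∏ t ∈ U, (∑ s ∈ V, a s t) ^ (#U : ℝ)⁻¹ := by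
    let _ : MeasurableSpace β := ⊤
    simpa [MeasureTheory.lintegral_finset] using
      ENNReal.lintegral_prod_norm_pow_le (μ := MeasureTheory.Measure.count.restrict (V : Set β)) U
        (f := fun t s ↦ a s t) (fun t _ ↦ measurable_from_top.aemeasurable)
        (p := fun _ ↦ (#U : ℝ)⁻¹) (by simp [hU₀]) (fun _ _ ↦ by positivity)
  calc (∑ s ∈ V, b s) ^ #U
      ≤ (C ^ (#U : ℝ)⁻¹ * ∏ t ∈ U, (∑ s ∈ V, a s t) ^ (#U : ℝ)⁻¹) ^ #U := by
        gcongr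
        calc ∑ s ∈ V, b s ≤ ∑ s ∈ V, C ^ (#U : ℝ)⁻¹ * ∏ t ∈ U, a s t ^ (#U : ℝ)⁻¹ :=
              Finset.sum_le_sum hroot
          _ ≤ _ := by rw [← Finset.mul_sum]; gcongr
    _ = C * ∏ t ∈ U, ∑ s ∈ V, a s t := by
        simp only [mul_pow, ← Finset.prod_pow, root_pow]

open Classical in
/-- The number of patterns `(p i x)_{i ∈ J}` displayed by the points `x ∈ A`, i.e. the size of the
projection to the coordinates in `J` of the set of labellings of `A`. -/
noncomputable def patternCount (p : ι → α → κ) (A : Finset α) (J : Finset ι) : ℕ :=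
  #(A.image fun x (i : J) ↦ p i x)

theorem pattern_eq_iff {p : ι → α → κ} {J : Finset ι} {x y : α} :
    (fun i : J ↦ p i x) = (fun i : J ↦ p i y) ↔ ∀ i ∈ J, p i x = p i y := by
  simp only [funext_iff, Subtype.forall]

theorem patternCount_mono (p : ι → α → κ) {A B : Finset α} (h : A ⊆ B) (J : Finset ι) :
    patternCount p A J ≤ patternCount p B J := by
  classical exact Finset.card_le_card (Finset.image_subset_image h)

theorem patternCount_pos (p : ι → α → κ) {A : Finset α} (hA : A.Nonempty) (J : Finset ι) :
    0 < patternCount p A J := by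
  classical exact Finset.card_pos.2 (hA.image _)

theorem patternCount_empty_right_le (p : ι → α → κ) (A : Finset α) : patternCount p A ∅ ≤ 1 :=
  Finset.card_le_one_of_subsingleton _

theorem patternCount_eq_card {p : ι → α → κ} {A : Finset α} {J : Finset ι}
    (h : ∀ x ∈ A, ∀ y ∈ A, (∀ i ∈ J, p i x = p i y) → x = y) : patternCount p A J = #A := by
  classical exact Finset.card_image_of_injOn fun x hx y hy hxy ↦ h x hx y hy (pattern_eq_iff.1 hxy)

theorem patternCount_le_card_of_code {p : ι → α → κ} {A : Finset α} {J : Finset ι} {E : Finset β}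
    {code : α → β} (hE : ∀ x ∈ A, code x ∈ E)
    (h : ∀ x ∈ A, ∀ y ∈ A, code x = code y → ∀ i ∈ J, p i x = p i y) :
    patternCount p A J ≤ #E := by
  classical
  calc patternCount p A J ≤ #(A.image code) :=
        card_image_le_card_image fun x hx y hy hxy ↦ pattern_eq_iff.2 (h x hx y hy hxy)
    _ ≤ #E := Finset.card_le_card (Finset.image_subset_iff.2 hE)

open Classical in
theorem patternCount_insert [DecidableEq ι] (p : ι → α → κ) (A : Finset α) (a : ι) (J : Finset ι) :
    patternCount p A (insert a J) =
      ∑ b ∈ A.image (p a), patternCount p {x ∈ A | p a x = b} J := by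
  have hpair : patternCount p A (insert a J) =
      #(A.image fun x ↦ (p a x, fun i : J ↦ p i x)) := by
    refine le_antisymm (card_image_le_card_image fun x _ y _ h ↦ ?_)
      (card_image_le_card_image fun x _ y _ h ↦ ?_) <;>
    simpa only [pattern_eq_iff, Prod.mk.injEq, Finset.forall_mem_insert] using h
  rw [hpair, Finset.card_eq_sum_card_fiberwise (f := Prod.fst) (t := A.image (p a))]
  · refine Finset.sum_congr rfl fun b _ ↦ ?_
    rw [Finset.filter_image]
    refine le_antisymm (card_image_le_card_image fun x hx y hy h ↦ ?_)
      (card_image_le_card_image fun x _ y _ h ↦ (Prod.ext_iff.1 h).2)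
    exact Prod.ext ((Finset.mem_filter.1 hx).2.trans (Finset.mem_filter.1 hy).2.symm) h
  · simp only [Set.MapsTo, Finset.coe_image, Set.forall_mem_image]
    exact fun x hx ↦ ⟨x, hx, rfl⟩

theorem patternCount_pow_le_prod [DecidableEq ι] {p : ι → α → κ} {I : Finset τ}
    {S : τ → Finset ι} {K : ℕ} {J : Finset ι} (hK : ∀ i ∈ J, K ≤ #{t ∈ I | i ∈ S t})
    {A : Finset α} (hA : A.Nonempty) :
    patternCount p A J ^ K ≤ ∏ t ∈ I, patternCount p A (S t) := by
  classical
  obtain rfl | hK₀ := K.eq_zero_or_pos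
  · rw [pow_zero]
    exact Finset.prod_pos fun t _ ↦ patternCount_pos p hA (S t)
  induction J using Finset.induction generalizing A with
  | empty =>
    calc patternCount p A ∅ ^ K ≤ 1 := pow_le_one' (patternCount_empty_right_le p A) K
      _ ≤ ∏ t ∈ I, patternCount p A (S t) :=
        Finset.one_le_prod' fun t _ ↦ patternCount_pos p hA (S t)
  | insert a J _ ih =>
    rw [Finset.forall_mem_insert] at hK
    obtain ⟨U, hU, rfl⟩ := Finset.exists_subset_card_eq hK.1
    have hUI : U ⊆ I := hU.trans (Finset.filter_subset _ _)
    have hUS (t) (ht : t ∈ U) : insert a (S t) = S t :=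
      Finset.insert_eq_of_mem (Finset.mem_filter.1 (hU ht)).2
    have hfibre (b) (hb : b ∈ A.image (p a)) :
        patternCount p {x ∈ A | p a x = b} J ^ #U ≤
          (∏ t ∈ I \ U, patternCount p A (S t)) *
            ∏ t ∈ U, patternCount p {x ∈ A | p a x = b} (S t) := by
      refine (ih hK.2 (Finset.fiber_nonempty_iff_mem_image.2 hb)).trans ?_
      rw [← Finset.prod_sdiff hUI]
      gcongr
      exact patternCount_mono p (Finset.filter_subset _ _) _
    have key := sum_pow_card_le_mul_prod_sum (Finset.card_pos.1 hK₀) (V := A.image (p a))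
      (b := fun b ↦ (patternCount p {x ∈ A | p a x = b} J : ℝ≥0∞))
      (a := fun b t ↦ (patternCount p {x ∈ A | p a x = b} (S t) : ℝ≥0∞))
      (C := ((∏ t ∈ I \ U, patternCount p A (S t) : ℕ) : ℝ≥0∞))
      fun b hb ↦ mod_cast hfibre b hb
    calc patternCount p A (insert a J) ^ #U
        = (∑ b ∈ A.image (p a), patternCount p {x ∈ A | p a x = b} J) ^ #U := by
          rw [patternCount_insert]
      _ ≤ (∏ t ∈ I \ U, patternCount p A (S t)) *
            ∏ t ∈ U, ∑ b ∈ A.image (p a), patternCount p {x ∈ A | p a x = b} (S t) :=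
          mod_cast key
      _ = (∏ t ∈ I \ U, patternCount p A (S t)) * ∏ t ∈ U, patternCount p A (S t) := by
          congr 1
          exact Finset.prod_congr rfl fun t ht ↦ by rw [← patternCount_insert, hUS t ht]
      _ = ∏ t ∈ I, patternCount p A (S t) := Finset.prod_sdiff hUI

end Shearer

section WeightedCounting

variable {α β ι κ : Type*}

theorem sum_prod_comp_le [Fintype ι] [Fintype β] [DecidableEq β] {E : Finset α}
    {Z : α → ι → β} {M : ℝ} (hM : ∀ z, (#{x ∈ E | Z x = z} : ℝ) ≤ M) {w : β → ℝ}
    (hw : ∀ b, 0 ≤ w b) :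
    ∑ x ∈ E, ∏ i, w (Z x i) ≤ M * (∑ b, w b) ^ Fintype.card ι := by
  classical
  calc ∑ x ∈ E, ∏ i, w (Z x i) = ∑ z, ∑ x ∈ E with Z x = z, ∏ i, w (Z x i) :=
        (Finset.sum_fiberwise E Z _).symm
    _ = ∑ z : ι → β, #{x ∈ E | Z x = z} * ∏ i, w (z i) := by
        refine Finset.sum_congr rfl fun z _ ↦ ?_
        rw [← nsmul_eq_mul]
        exact Finset.sum_eq_card_nsmul fun x hx ↦ by rw [(Finset.mem_filter.1 hx).2]
    _ ≤ ∑ z : ι → β, M * ∏ i, w (z i) :=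
        Finset.sum_le_sum fun z _ ↦
          mul_le_mul_of_nonneg_right (hM z) (Finset.prod_nonneg fun i _ ↦ hw (z i))
    _ = M * (∑ b, w b) ^ Fintype.card ι := by
        rw [← Finset.mul_sum, ← Fintype.prod_sum, Finset.prod_const, Finset.card_univ]

-- The tangent line of `exp` at `b` gives this form of Jensen's inequality.
theorem card_mul_exp_le_sum_exp {E : Finset α} {g : α → ℝ} {b : ℝ} (h : b * #E ≤ ∑ x ∈ E, g x) :
    #E * Real.exp b ≤ ∑ x ∈ E, Real.exp (g x) := by
  have tangent (x : α) : Real.exp b * (g x - b + 1) ≤ Real.exp (g x) := by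
    calc Real.exp b * (g x - b + 1) ≤ Real.exp b * Real.exp (g x - b) := by
          gcongr; exact Real.add_one_le_exp _
      _ = Real.exp (g x) := by rw [← Real.exp_add, add_sub_cancel]
  calc #E * Real.exp b ≤ Real.exp b * (∑ x ∈ E, g x - b * #E + #E) := by
        rw [mul_comm]; gcongr; linarith
    _ = ∑ x ∈ E, Real.exp b * (g x - b + 1) := by
        rw [← Finset.mul_sum]
        simp only [Finset.sum_add_distrib, Finset.sum_sub_distrib, Finset.sum_const, nsmul_eq_mul]
        ring
    _ ≤ ∑ x ∈ E, Real.exp (g x) := Finset.sum_le_sum fun x _ ↦ tangent x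

theorem card_le_mul_exp [Fintype ι] [Fintype κ] [DecidableEq κ] {E : Finset α}
    {Z : α → ι → Option κ} {M : ℝ} (hM : ∀ z, (#{x ∈ E | Z x = z} : ℝ) ≤ M) {b : ℝ}
    (hb : ((∑ x ∈ E, #{i | (Z x i).isSome} : ℕ) : ℝ) ≤ b * #E) {c : ℝ} (hc : 0 ≤ c) :
    (#E : ℝ) ≤
      M * Real.exp (c * b + Fintype.card ι * (Fintype.card κ * Real.exp (-c))) := by
  have hM₀ : 0 ≤ M := (Nat.cast_nonneg _).trans (hM fun _ ↦ none)
  let w : Option κ → ℝ := fun o ↦ if o.isSome then Real.exp (-c) else 1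
  have hw (o : Option κ) : 0 ≤ w o := by unfold w; split_ifs <;> positivity
  have weight_eq (x : α) : ∏ i, w (Z x i) = Real.exp (-c * #{i | (Z x i).isSome}) := by
    rw [mul_comm, Real.exp_nat_mul]
    simp [w, Finset.prod_ite]
  have weight_sum : (∑ o, w o) ≤ Real.exp (Fintype.card κ * Real.exp (-c)) := by
    calc ∑ o, w o = Fintype.card κ * Real.exp (-c) + 1 := by
          simp [w, Fintype.sum_option, add_comm]
      _ ≤ _ := Real.add_one_le_exp _
  have main : #E * Real.exp (-c * b) ≤
      M * Real.exp (Fintype.card ι * (Fintype.card κ * Real.exp (-c))) :=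
    calc #E * Real.exp (-c * b) ≤ ∑ x ∈ E, Real.exp (-c * #{i | (Z x i).isSome}) := by
          refine card_mul_exp_le_sum_exp ?_
          push_cast at hb
          rw [← Finset.mul_sum]
          linarith [mul_le_mul_of_nonneg_left hb hc]
      _ ≤ M * (∑ o, w o) ^ Fintype.card ι := by
          simpa only [weight_eq] using sum_prod_comp_le hM hw
      _ ≤ M * Real.exp (Fintype.card κ * Real.exp (-c)) ^ Fintype.card ι := by
          gcongr
      _ = _ := by rw [← Real.exp_nat_mul]
  calc (#E : ℝ) = #E * Real.exp (-c * b) * Real.exp (c * b) := by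
        rw [mul_assoc, ← Real.exp_add, neg_mul, neg_add_cancel, Real.exp_zero, mul_one]
    _ ≤ M * Real.exp (Fintype.card ι * (Fintype.card κ * Real.exp (-c))) * Real.exp (c * b) := by
        gcongr
    _ = _ := by rw [mul_assoc, ← Real.exp_add, add_comm]

end WeightedCounting

section Partition

variable {α κ Y : Type*}

theorem exists_radius_card_mul_le (W : Finset α) (d : α → ℝ) (a : ℝ) {δ : ℝ} (hδ : 0 < δ) {N : ℕ}
    (hN : 0 < N) :
    ∃ r, a < r ∧ r < a + 2 * N * δ ∧ #{w ∈ W | d w ∈ Set.Ico (r - δ) (r + δ)} * N ≤ #W := by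
  classical
  obtain ⟨l, hl, hcard⟩ := Finset.exists_card_fiber_le_of_card_le_nsmul (s := W)
    (t := Finset.range N) (f := fun w ↦ ⌊(d w - a) / (2 * δ)⌋₊) (b := (#W / N : ℚ))
    (Finset.nonempty_range_iff.2 hN.ne')
    (by rw [Finset.card_range, nsmul_eq_mul, mul_div_cancel₀ _ (by positivity)])
  have hlN : (l : ℝ) + 1 ≤ N := mod_cast Finset.mem_range.1 hl
  refine ⟨a + (2 * l + 1) * δ, lt_add_of_pos_right _ (by positivity), by nlinarith, ?_⟩
  rw [le_div_iff₀ (by positivity)] at hcard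
  refine le_trans (Nat.mul_le_mul_right _ (Finset.card_le_card ?_)) (mod_cast hcard)
  refine Finset.monotone_filter_right _ fun w _ hw ↦ ?_
  rw [Nat.floor_eq_iff (by have := hw.1; apply div_nonneg _ (by positivity); nlinarith),
    le_div_iff₀ (by positivity), div_lt_iff₀ (by positivity)]
  constructor <;> nlinarith [hw.1, hw.2]

variable [PseudoMetricSpace Y]

/-- The `δ`-boundary of the partition of `Y` with label function `P`: the points having a
differently labelled point at distance at most `δ`. -/
def partitionBoundary (P : Y → κ) (δ : ℝ) : Set Y :=
  {x | ∃ y, dist x y ≤ δ ∧ P x ≠ P y}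

/-- The label of the cell of `x` in the partition of `Y` generated by the balls
`ball (c j) (r j)`; `sel` names a ball from the set of all balls containing `x`. -/
def ballLabel (c : κ → Y) (r : κ → ℝ) (sel : Set κ → κ) (x : Y) : κ :=
  sel {j | dist x (c j) < r j}

theorem exists_dist_mem_Ico_of_mem_partitionBoundary {c : κ → Y} {r : κ → ℝ} {sel : Set κ → κ}
    {δ : ℝ} {x : Y} (hx : x ∈ partitionBoundary (ballLabel c r sel) δ) :
    ∃ j, dist x (c j) ∈ Set.Ico (r j - δ) (r j + δ) := by
  obtain ⟨y, hxy, hne⟩ := hx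
  by_contra! hout
  refine hne (congrArg sel (Set.ext fun j ↦ ?_))
  have hj := hout j
  have := dist_triangle x y (c j)
  have := dist_triangle y x (c j)
  rw [dist_comm y x] at this
  simp only [Set.mem_Ico, not_and_or, not_le, not_lt] at hj
  simp only [Set.mem_ofPred_eq]
  constructor <;> intro <;> rcases hj with hj | hj <;> linarith

open Classical in
theorem exists_partition_card_boundary_mul_le [Fintype κ] [Nonempty Y] {c : κ → Y} {ρ : ℝ}
    (hc : ∀ x, ∃ j, dist x (c j) < ρ) {δ : ℝ} (hδ : 0 < δ) {N : ℕ} (hN : 0 < N) (W : Finset α)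
    (y : α → Y) :
    ∃ P : Y → κ, (∀ x, dist x (c (P x)) < ρ + 2 * N * δ) ∧
      #{w ∈ W | y w ∈ partitionBoundary P δ} * N ≤ Fintype.card κ * #W := by
  have : Nonempty κ := (hc (Classical.arbitrary Y)).nonempty
  choose r hρr hr hcard using fun j ↦ exists_radius_card_mul_le W (fun w ↦ dist (y w) (c j)) ρ hδ hN
  refine ⟨ballLabel c r fun S ↦ Classical.epsilon (· ∈ S), fun x ↦ ?_, ?_⟩
  · obtain ⟨j, hj⟩ := hc x
    have hne : ∃ j, j ∈ {j | dist x (c j) < r j} := ⟨j, hj.trans (hρr j)⟩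
    exact (Classical.epsilon_spec hne).trans (hr _)
  · calc _ ≤ #(Finset.univ.biUnion fun j ↦
            {w ∈ W | dist (y w) (c j) ∈ Set.Ico (r j - δ) (r j + δ)}) * N := by
          gcongr
          intro w hw
          rw [Finset.mem_filter] at hw
          simpa [hw.1] using exists_dist_mem_Ico_of_mem_partitionBoundary hw.2
      _ ≤ ∑ j, #{w ∈ W | dist (y w) (c j) ∈ Set.Ico (r j - δ) (r j + δ)} * N := by
          rw [← Finset.sum_mul]
          gcongr
          exact Finset.card_biUnion_le
      _ ≤ ∑ _j : κ, #W := Finset.sum_le_sum fun j _ ↦ hcard j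
      _ = Fintype.card κ * #W := by simp

open Classical in
theorem exists_fine_partition_card_boundary_mul_le [CompactSpace Y] [Nonempty Y] {s : ℝ}
    (hs : 0 < s) :
    ∃ C : Finset Y, ∀ N : ℕ, 0 < N → ∃ δ > 0, ∀ (W : Finset α) (y : α → Y),
      ∃ P : Y → C, (∀ x x', P x = P x' → dist x x' ≤ s) ∧
        #{w ∈ W | y w ∈ partitionBoundary P δ} * N ≤ #C * #W := by
  obtain ⟨C, -, hC, hcover⟩ :=
    finite_cover_balls_of_compact (isCompact_univ (X := Y)) (e := s / 4) (by positivity)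
  lift C to Finset Y using hC
  refine ⟨C, fun N hN ↦ ?_⟩
  have hδ : 0 < s / (8 * N) := div_pos hs (mul_pos (by norm_num) (mod_cast hN))
  refine ⟨s / (8 * N), hδ, fun W y ↦ ?_⟩
  obtain ⟨P, hP, hbd⟩ := exists_partition_card_boundary_mul_le (c := ((↑) : C → Y)) (ρ := s / 4)
    (fun x ↦ by simpa using hcover (Set.mem_univ x)) hδ hN W y
  have hradius : s / 4 + 2 * N * (s / (8 * N)) = s / 2 := by field_simp; norm_num
  refine ⟨P, fun x x' hxx' ↦ ?_, by simpa using hbd⟩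
  have hx := hP x
  have hx' := hP x'
  rw [hradius] at hx hx'
  rw [hxx'] at hx
  linarith [dist_triangle_right x x' (P x' : Y)]

end Partition

section Bowen

theorem exists_isSeparated_card_eq {α : Type*} {R : SetRel α α} [R.IsRefl] [R.IsSymm] {k : ℕ}
    (h : ∀ E : Finset α, R.IsCover Set.univ E → k ≤ #E) :
    ∃ E : Finset α, #E = k ∧ R.IsSeparated (E : Set α) := by
  classical
  induction k with
  | zero => exact ⟨∅, by simp⟩
  | succ k ih =>
    obtain ⟨E, rfl, hE⟩ := ih fun E hE ↦ (Nat.le_succ k).trans (h E hE)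
    have hcover : ¬ R.IsCover Set.univ (E : Set α) := fun hE ↦ (h E hE).not_gt (Nat.lt_succ_self _)
    simp only [SetRel.IsCover, Set.mem_univ, forall_const, not_forall, not_exists, not_and]
      at hcover
    obtain ⟨x, hx⟩ := hcover
    refine ⟨insert x E, Finset.card_insert_of_notMem fun hxE ↦ hx x hxE (R.refl x), ?_⟩
    rw [Finset.coe_insert]
    exact hE.insert fun y hy hxy ↦ absurd hxy (hx y hy)

/-- The relation `d^B_F(x, y) ≤ ε` of being `ε`-close in the Bowen metric of `T` over `F`. -/
def bowenRel (T : X ≃ₜ X) (F : Finset ℤ) (ε : ℝ) : SetRel X X :=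
  {p | ∀ i ∈ F, dist ((T.toEquiv ^ i) p.1) ((T.toEquiv ^ i) p.2) ≤ ε}

variable (T : X ≃ₜ X) {F G I : Finset ℤ} {δ ε : ℝ}

instance : (bowenRel T F ε).IsSymm :=
  ⟨fun _ _ h i hi ↦ by rw [dist_comm]; exact h i hi⟩

theorem bowenRel_isRefl (hε : 0 ≤ ε) : (bowenRel T F ε).IsRefl :=
  ⟨fun _ _ _ ↦ by simpa using hε⟩

theorem toEquiv_zpow_add_apply (i j : ℤ) (x : X) :
    (T.toEquiv ^ (i + j)) x = (T.toEquiv ^ i) ((T.toEquiv ^ j) x) := by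
  rw [zpow_add, Equiv.Perm.mul_apply]

theorem continuous_toEquiv_zpow (i : ℤ) : Continuous (T.toEquiv ^ i) := by
  have h := map_zpow (MonoidHom.mk' (Homeomorph.toEquiv : (X ≃ₜ X) → Equiv.Perm X)
    fun _ _ ↦ rfl) T i
  exact h ▸ (T ^ i).continuous

theorem bowenRel_mem_uniformity [CompactSpace X] (F : Finset ℤ) (hε : 0 < ε) :
    bowenRel T F ε ∈ 𝓤 X := by
  have hF : bowenRel T F ε =
      ⋂ i ∈ F, Prod.map (T.toEquiv ^ i) (T.toEquiv ^ i) ⁻¹' {p | dist p.1 p.2 ≤ ε} := by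
    ext; simp [bowenRel]
  rw [hF, biInter_finset_mem]
  exact fun i _ ↦ CompactSpace.uniformContinuous_of_continuous (continuous_toEquiv_zpow T i)
    (Metric.uniformity_basis_dist_le.mem_of_mem hε)

theorem spaZ_le_card {E : Finset X} (hE : (bowenRel T F ε).IsCover Set.univ (E : Set X)) :
    spaZ T F ε ≤ #E :=
  Nat.sInf_le ⟨E, rfl, fun x ↦ hE (Set.mem_univ x)⟩

theorem exists_isCover_card_eq_spaZ [CompactSpace X] (F : Finset ℤ) (hε : 0 < ε) :
    ∃ E : Finset X, #E = spaZ T F ε ∧ (bowenRel T F ε).IsCover Set.univ (E : Set X) := by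
  obtain ⟨E, hfin, hE⟩ := isCompact_univ.totallyBounded _ (bowenRel_mem_uniformity T F hε)
  obtain ⟨E', hE', hcover⟩ := Nat.sInf_mem (s := {k | ∃ E : Finset X, #E = k ∧
    ∀ x, ∃ e ∈ E, (x, e) ∈ bowenRel T F ε})
    ⟨_, hfin.toFinset, rfl, fun x ↦ by simpa using hE (Set.mem_univ x)⟩
  exact ⟨E', hE', fun x _ ↦ hcover x⟩

theorem spaZ_pos [CompactSpace X] [Nonempty X] (F : Finset ℤ) (hε : 0 < ε) : 0 < spaZ T F ε := by
  obtain ⟨E, hcard, hE⟩ := exists_isCover_card_eq_spaZ T F hε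
  obtain ⟨e, he, -⟩ := hE (Set.mem_univ (Classical.arbitrary X))
  exact hcard ▸ Finset.card_pos.2 ⟨e, he⟩

theorem exists_isSeparated_card_eq_spaZ (F : Finset ℤ) (hε : 0 ≤ ε) :
    ∃ E : Finset X, #E = spaZ T F ε ∧ (bowenRel T F ε).IsSeparated (E : Set X) :=
  have := bowenRel_isRefl T (F := F) hε
  exists_isSeparated_card_eq fun _ ↦ spaZ_le_card T

theorem spaZ_le_spaZ_of_surjective [CompactSpace X] {φ : X → X} (hφ : φ.Surjective) (hδ : 0 < δ)
    (h : ∀ x y, (x, y) ∈ bowenRel T G δ → (φ x, φ y) ∈ bowenRel T F ε) :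
    spaZ T F ε ≤ spaZ T G δ := by
  classical
  obtain ⟨E, hcard, hE⟩ := exists_isCover_card_eq_spaZ T G hδ
  rw [← hcard]
  refine (spaZ_le_card T (E := E.image φ) fun x _ ↦ ?_).trans Finset.card_image_le
  obtain ⟨x, rfl⟩ := hφ x
  obtain ⟨e, he, hxe⟩ := hE (Set.mem_univ x)
  exact ⟨φ e, Finset.mem_coe.2 (Finset.mem_image_of_mem φ he), h x e hxe⟩

theorem spaZ_le_spaZ_of_sub_mem [CompactSpace X] (hε : 0 < ε) {a : ℤ} (h : ∀ i ∈ F, i - a ∈ G) :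
    spaZ T F ε ≤ spaZ T G ε := by
  refine spaZ_le_spaZ_of_surjective T (T.toEquiv ^ (-a)).surjective hε fun x y hxy i hi ↦ ?_
  simpa only [← toEquiv_zpow_add_apply, ← sub_eq_add_neg] using hxy (i - a) (h i hi)

theorem spaZ_add_le [CompactSpace X] (hδ : 0 < δ)
    (h : ∀ x y : X, dist x y ≤ δ → (x, y) ∈ bowenRel T I ε) :
    spaZ T (F + I) ε ≤ spaZ T F δ := by
  refine spaZ_le_spaZ_of_surjective T Function.surjective_id hδ fun x y hxy k hk ↦ ?_
  obtain ⟨i, hi, j, hj, rfl⟩ := Finset.mem_add.1 hk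
  rw [add_comm, toEquiv_zpow_add_apply, toEquiv_zpow_add_apply]
  exact h _ _ (hxy i hi) j hj

theorem exists_forall_dist_le_mem_bowenRel [CompactSpace X] (I : Finset ℤ) (hε : 0 < ε) :
    ∃ δ > 0, ∀ x y : X, dist x y ≤ δ → (x, y) ∈ bowenRel T I ε := by
  simpa [Set.subset_def] using
    Metric.uniformity_basis_dist_le.mem_iff.1 (bowenRel_mem_uniformity T I hε)

end Bowen

section KeyInequality

variable {κ : Type*} (T : X ≃ₜ X)

theorem card_le_card_filter_sub_mem {F : Finset ℤ} (G : Finset ℤ) {i : ℤ} (hi : i ∈ F) :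
    #G ≤ #{t ∈ F - G | i - t ∈ G} :=
  Finset.card_le_card_of_injOn (i - ·)
    (fun g hg ↦ Finset.mem_filter.2 ⟨Finset.sub_mem_sub hi hg, by simpa using hg⟩)
    sub_right_injective.injOn

theorem card_pow_le_spaZ_pow [CompactSpace X] {P : X → κ} {s δ : ℝ} {F : Finset ℤ} (G : Finset ℤ)
    (hP : ∀ x y, P x = P y → dist x y ≤ s) (hδ : 0 < δ) {A : Finset X} (hA : A.Nonempty)
    (hsep : (bowenRel T F s).IsSeparated (A : Set X))
    (hbd : ∀ x ∈ A, ∀ y ∈ A, ∀ i ∈ F, (T.toEquiv ^ i) x ∈ partitionBoundary P δ →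
      P ((T.toEquiv ^ i) x) = P ((T.toEquiv ^ i) y)) :
    #A ^ #G ≤ spaZ T G δ ^ #(F - G) := by
  obtain ⟨E, hcard, hE⟩ := exists_isCover_card_eq_spaZ T G hδ
  choose e he hxe using fun x ↦ hE (Set.mem_univ x)
  let p : ℤ → X → κ := fun i x ↦ P ((T.toEquiv ^ i) x)
  let window (t : ℤ) : Finset ℤ := {i ∈ F | i - t ∈ G}
  have hpattern : patternCount p A F = #A := by
    refine patternCount_eq_card fun x hx y hy hxy ↦ ?_
    by_contra hne
    exact hsep hx hy hne fun i hi ↦ hP _ _ (hxy i hi)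
  have hmult (i) (hi : i ∈ F) : #G ≤ #{t ∈ F - G | i ∈ window t} := by
    simpa [window, hi] using card_le_card_filter_sub_mem G hi
  have hclose (t x) (i) (hi : i ∈ window t) :
      dist ((T.toEquiv ^ i) x) ((T.toEquiv ^ (i - t)) (e ((T.toEquiv ^ t) x))) ≤ δ := by
    simpa only [← toEquiv_zpow_add_apply, sub_add_cancel] using
      hxe ((T.toEquiv ^ t) x) (i - t) (Finset.mem_filter.1 hi).2
  -- Off the boundary the spanning point of `T ^ t x` determines the labels over the window at `t`;
  -- on the boundary the labels are common to all of `A`.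
  have hcode (t : ℤ) : patternCount p A (window t) ≤ #E := by
    refine patternCount_le_card_of_code (code := fun x ↦ e ((T.toEquiv ^ t) x))
      (fun x _ ↦ he _) fun x hx y hy hxy i hi ↦ ?_
    have hiF : i ∈ F := Finset.mem_of_mem_filter i hi
    by_cases hxb : (T.toEquiv ^ i) x ∈ partitionBoundary P δ
    · exact hbd x hx y hy i hiF hxb
    by_cases hyb : (T.toEquiv ^ i) y ∈ partitionBoundary P δ
    · exact (hbd y hy x hx i hiF hyb).symm
    simp only [partitionBoundary, Set.mem_ofPred_eq, not_exists, not_and, not_not] at hxb hyb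
    exact (hxb _ (hclose t x i hi)).trans (hxy ▸ hyb _ (hclose t y i hi)).symm
  calc #A ^ #G = patternCount p A F ^ #G := by rw [hpattern]
    _ ≤ ∏ t ∈ F - G, patternCount p A (window t) := patternCount_pow_le_prod hmult hA
    _ ≤ ∏ _t ∈ F - G, #E := Finset.prod_le_prod' fun t _ ↦ hcode t
    _ = spaZ T G δ ^ #(F - G) := by rw [Finset.prod_const, hcard]

open Classical in
/-- The labels that the orbit of `x` shows over `F` at the times when it visits the `δ`-boundary of
the partition `P`; the value `none` stands for the other times. -/
noncomputable def boundaryItinerary (P : X → κ) (δ : ℝ) (F : Finset ℤ) (x : X) (i : F) :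
    Option κ :=
  if (T.toEquiv ^ (i : ℤ)) x ∈ partitionBoundary P δ then some (P ((T.toEquiv ^ (i : ℤ)) x))
  else none

theorem eq_of_boundaryItinerary_eq {P : X → κ} {δ : ℝ} {F : Finset ℤ} {x y : X}
    (h : boundaryItinerary T P δ F x = boundaryItinerary T P δ F y) {i : ℤ} (hi : i ∈ F)
    (hx : (T.toEquiv ^ i) x ∈ partitionBoundary P δ) :
    P ((T.toEquiv ^ i) x) = P ((T.toEquiv ^ i) y) := by
  have hi := congrFun h ⟨i, hi⟩
  simp only [boundaryItinerary, hx, if_true] at hi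
  split_ifs at hi
  exact Option.some.inj hi

open Classical in
theorem card_boundaryItinerary_isSome (P : X → κ) (δ : ℝ) (F : Finset ℤ) (x : X) :
    #{i | (boundaryItinerary T P δ F x i).isSome} =
      #{i ∈ F | (T.toEquiv ^ i) x ∈ partitionBoundary P δ} := by
  have hsome (i : F) : (boundaryItinerary T P δ F x i).isSome ↔
      (T.toEquiv ^ (i : ℤ)) x ∈ partitionBoundary P δ := by
    unfold boundaryItinerary; split_ifs with h <;> simp [h]
  simp only [hsome, Finset.univ_eq_attach]
  rw [Finset.filter_attach fun i ↦ (T.toEquiv ^ i) x ∈ partitionBoundary P δ, Finset.card_map,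
    Finset.card_attach]

open Classical in
theorem card_mul_log_card_le [CompactSpace X] [Nonempty X] [Fintype κ] {P : X → κ} {s δ : ℝ}
    {F : Finset ℤ} (G : Finset ℤ) (hP : ∀ x y, P x = P y → dist x y ≤ s) (hδ : 0 < δ)
    {E : Finset X} (hE₀ : E.Nonempty) (hE : (bowenRel T F s).IsSeparated (E : Set X)) {b : ℝ}
    (hb : ((∑ x ∈ E, #{i ∈ F | (T.toEquiv ^ i) x ∈ partitionBoundary P δ} : ℕ) : ℝ) ≤ b * #E)
    {c : ℝ} (hc : 0 ≤ c) :
    #G * Real.log #E ≤ #(F - G) * Real.log (spaZ T G δ) +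
      #G * (c * b + #F * (Fintype.card κ * Real.exp (-c))) := by
  obtain rfl | hG := G.eq_empty_or_nonempty
  · simp
  have hG₀ : (0 : ℝ) < #G := mod_cast hG.card_pos
  have hE₁ : (0 : ℝ) < #E := mod_cast hE₀.card_pos
  have : (0 : ℝ) < spaZ T G δ := mod_cast spaZ_pos T G hδ
  have hfibre (z : F → Option κ) : (#{x ∈ E | boundaryItinerary T P δ F x = z} : ℝ) ≤
      Real.exp (#(F - G) * Real.log (spaZ T G δ) / #G) := by
    obtain hA | hA := {x ∈ E | boundaryItinerary T P δ F x = z}.eq_empty_or_nonempty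
    · rw [hA, Finset.card_empty, Nat.cast_zero]; positivity
    have hA₀ : (0 : ℝ) < #{x ∈ E | boundaryItinerary T P δ F x = z} := mod_cast hA.card_pos
    rw [← Real.log_le_iff_le_exp hA₀, le_div_iff₀' hG₀, ← Real.log_pow, ← Real.log_pow]
    refine Real.log_le_log (by positivity) (mod_cast card_pow_le_spaZ_pow T G hP hδ hA
      (hE.mono (Finset.coe_subset.2 (Finset.filter_subset _ _))) fun x hx y hy i hi ↦ ?_)
    exact eq_of_boundaryItinerary_eq T
      ((Finset.mem_filter.1 hx).2.trans (Finset.mem_filter.1 hy).2.symm) hi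
  have hcount := card_le_mul_exp hfibre
    (by simpa only [card_boundaryItinerary_isSome] using hb) hc
  rw [← Real.exp_add, ← Real.log_le_iff_le_exp hE₁, Fintype.card_coe] at hcount
  calc #G * Real.log #E ≤ #G * (#(F - G) * Real.log (spaZ T G δ) / #G +
          (c * b + #F * (Fintype.card κ * Real.exp (-c)))) := by gcongr
    _ = _ := by rw [mul_add, mul_div_cancel₀ _ hG₀.ne']

theorem exists_mul_div_add_mul_exp_le (k : ℕ) {γ : ℝ} (hγ : 0 < γ) :
    ∃ c ≥ 0, ∃ N : ℕ, 0 < N ∧ c * (k / N) + k * Real.exp (-c) ≤ γ := by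
  have hk : Tendsto (fun c : ℝ ↦ k * Real.exp (-c)) atTop (nhds 0) := by
    simpa using Real.tendsto_exp_neg_atTop_nhds_zero.const_mul (k : ℝ)
  obtain ⟨c, hcγ, hc⟩ := ((hk.eventually_le_const (half_pos hγ)).and (eventually_ge_atTop 0)).exists
  have hN : Tendsto (fun N : ℕ ↦ c * (k / N)) atTop (nhds 0) := by
    simpa using (tendsto_const_div_atTop_nhds_zero_nat (k : ℝ)).const_mul c
  obtain ⟨N, hNγ, hN⟩ := ((hN.eventually_le_const (half_pos hγ)).and (eventually_gt_atTop 0)).exists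
  exact ⟨c, hc, N, hN, by linarith⟩

theorem exists_card_mul_log_spaZ_le [CompactSpace X] [Nonempty X] {s γ : ℝ} (hs : 0 < s)
    (hγ : 0 < γ) :
    ∃ δ > 0, ∀ F G : Finset ℤ, #G * Real.log (spaZ T F s) ≤
      #(F - G) * Real.log (spaZ T G δ) + γ * #F * #G := by
  classical
  obtain ⟨C, hC⟩ := exists_fine_partition_card_boundary_mul_le (α := X × ℤ) (Y := X) hs
  obtain ⟨c, hc, N, hN, hcN⟩ := exists_mul_div_add_mul_exp_le #C hγ
  have hN₀ : (0 : ℝ) < N := mod_cast hN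
  obtain ⟨δ, hδ, hC⟩ := hC N hN
  refine ⟨δ, hδ, fun F G ↦ ?_⟩
  obtain ⟨E, hcard, hE⟩ := exists_isSeparated_card_eq_spaZ T F hs.le
  have hE₀ : E.Nonempty := Finset.card_pos.1 (hcard ▸ spaZ_pos T F hs)
  obtain ⟨P, hP, hvisits⟩ := hC (E ×ˢ F) fun w ↦ (T.toEquiv ^ w.2) w.1
  rw [Finset.card_filter, Finset.sum_product, Finset.card_product] at hvisits
  simp only [← Finset.card_filter] at hvisits
  have hb : ((∑ x ∈ E, #{i ∈ F | (T.toEquiv ^ i) x ∈ partitionBoundary P δ} : ℕ) : ℝ) ≤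
      #C / N * #F * #E := by
    rw [div_mul_eq_mul_div, div_mul_eq_mul_div, le_div_iff₀ hN₀, mul_assoc, mul_comm (#F : ℝ)]
    exact_mod_cast hvisits
  calc #G * Real.log (spaZ T F s)
      ≤ #(F - G) * Real.log (spaZ T G δ) +
        #G * (c * (#C / N * #F) + #F * (#C * Real.exp (-c))) := by
        simpa only [hcard, Fintype.card_coe] using card_mul_log_card_le T G hP hδ hE₀ hE hb hc
    _ = #(F - G) * Real.log (spaZ T G δ) + (c * (#C / N) + #C * Real.exp (-c)) * #F * #G := by
        ring
    _ ≤ #(F - G) * Real.log (spaZ T G δ) + γ * #F * #G := by gcongr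

end KeyInequality

section Entropy

variable (T : X ≃ₜ X)

theorem limsup_le_htopZ {δ : ℝ} (hδ : 0 < δ) :
    limsup (fun n : ℕ ↦ ((Real.log (spaZ T (Finset.Icc 0 ((n : ℤ) - 1)) δ) / n : ℝ) : EReal))
      atTop ≤ htopZ T :=
  le_iSup₂ (f := fun (δ : ℝ) (_ : 0 < δ) ↦ limsup (fun n : ℕ ↦
    ((Real.log (spaZ T (Finset.Icc 0 ((n : ℤ) - 1)) δ) / n : ℝ) : EReal)) atTop) δ hδ

theorem htopZ_nonneg : 0 ≤ htopZ T := by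
  refine le_trans (le_limsup_of_frequently_le (Frequently.of_forall fun n ↦ ?_)
    (by isBoundedDefault)) (limsup_le_htopZ T one_pos)
  exact EReal.coe_nonneg.2 (div_nonneg (Real.log_natCast_nonneg _) (Nat.cast_nonneg _))

theorem log_spaZ_le_log_spaZ [CompactSpace X] [Nonempty X] {F G : Finset ℤ} {δ ε : ℝ} (hε : 0 < ε)
    (h : spaZ T F ε ≤ spaZ T G δ) : Real.log (spaZ T F ε) ≤ Real.log (spaZ T G δ) :=
  Real.log_le_log (mod_cast spaZ_pos T F hε) (mod_cast h)

theorem exists_card_Icc_sub_le (G : Finset ℤ) :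
    ∃ D : ℕ, ∀ n : ℕ, #(Finset.Icc 0 ((n : ℤ) - 1) - G) ≤ n + D := by
  obtain ⟨a, ha⟩ := G.bddBelow
  obtain ⟨b, hb⟩ := G.bddAbove
  refine ⟨(b - a).toNat, fun n ↦ ?_⟩
  calc #(Finset.Icc 0 ((n : ℤ) - 1) - G) ≤ #(Finset.Icc (-b) (n - 1 - a)) := by
        refine Finset.card_le_card fun t ht ↦ ?_
        obtain ⟨i, hi, g, hg, rfl⟩ := Finset.mem_sub.1 ht
        have := ha hg
        have := hb hg
        rw [Finset.mem_Icc] at hi ⊢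
        omega
    _ ≤ n + (b - a).toNat := by rw [Int.card_Icc]; omega

theorem exists_card_mul_log_spaZ_Icc_le [CompactSpace X] [Nonempty X] {s γ : ℝ} (hs : 0 < s)
    (hγ : 0 < γ) :
    ∃ δ > 0, ∀ G : Finset ℤ, ∃ D : ℕ, ∀ n : ℕ,
      #G * Real.log (spaZ T (Finset.Icc 0 ((n : ℤ) - 1)) s) ≤
        (n + D) * Real.log (spaZ T G δ) + γ * n * #G := by
  obtain ⟨δ, hδ, hkey⟩ := exists_card_mul_log_spaZ_le T hs hγ
  refine ⟨δ, hδ, fun G ↦ ?_⟩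
  obtain ⟨D, hD⟩ := exists_card_Icc_sub_le G
  refine ⟨D, fun n ↦ ?_⟩
  calc #G * Real.log (spaZ T (Finset.Icc 0 ((n : ℤ) - 1)) s)
      ≤ #(Finset.Icc 0 ((n : ℤ) - 1) - G) * Real.log (spaZ T G δ) + γ * n * #G := by
        simpa using hkey (Finset.Icc 0 ((n : ℤ) - 1)) G
    _ ≤ (n + D) * Real.log (spaZ T G δ) + γ * n * #G := by
        gcongr
        · exact_mod_cast hD n

theorem exists_card_mul_le_log_spaZ [CompactSpace X] [Nonempty X] {a : ℝ} (ha : a < htopZ T) :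
    ∃ δ > 0, ∀ G : Finset ℤ, #G * a ≤ Real.log (spaZ T G δ) := by
  obtain ⟨a', haa', ha'⟩ := EReal.lt_iff_exists_real_btwn.1 ha
  rw [EReal.coe_lt_coe_iff] at haa'
  obtain ⟨s, hs, hlim⟩ : ∃ s, ∃ _ : 0 < s, (a' : EReal) < limsup (fun n : ℕ ↦
      ((Real.log (spaZ T (Finset.Icc 0 ((n : ℤ) - 1)) s) / n : ℝ) : EReal)) atTop := by
    simpa only [htopZ, lt_iSup_iff] using ha'
  obtain ⟨δ, hδ, hkey⟩ := exists_card_mul_log_spaZ_Icc_le T hs (sub_pos.2 haa')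
  refine ⟨δ, hδ, fun G ↦ ?_⟩
  obtain ⟨D, hD⟩ := hkey G
  set L := Real.log (spaZ T G δ)
  have hfreq : ∃ᶠ n : ℕ in atTop, #G * a' ≤ L + D * L / n + (a' - a) * #G := by
    refine ((frequently_lt_of_lt_limsup (by isBoundedDefault) hlim).and_eventually
      (eventually_gt_atTop 0)).mono fun n ⟨hn, hn₀⟩ ↦ ?_
    have hn₁ : (0 : ℝ) < n := mod_cast hn₀
    rw [EReal.coe_lt_coe_iff, lt_div_iff₀ hn₁] at hn
    refine le_of_mul_le_mul_right ?_ hn₁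
    calc #G * a' * n = #G * (a' * n) := mul_assoc _ _ _
      _ ≤ #G * Real.log (spaZ T (Finset.Icc 0 ((n : ℤ) - 1)) s) := by gcongr
      _ ≤ (n + D) * L + (a' - a) * n * #G := hD n
      _ = (L + D * L / n + (a' - a) * #G) * n := by field_simp
  have hlimit : Tendsto (fun n : ℕ ↦ L + D * L / n + (a' - a) * #G) atTop
      (nhds (L + 0 + (a' - a) * #G)) :=
    (tendsto_const_nhds.add (tendsto_const_div_atTop_nhds_zero_nat _)).add tendsto_const_nhds
  linarith [ge_of_tendsto_of_frequently hlimit hfreq]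

theorem exists_log_spaZ_div_card_le [CompactSpace X] [Nonempty X] {m : ℕ} (hm : 1 ≤ m) {b : ℝ}
    (hb : htopZ T < b) {δ : ℝ} (hδ : 0 < δ) :
    ∃ n₀ : ℕ, ∀ F : Finset ℤ, BoundedGaps m F → n₀ ≤ #F →
      Real.log (spaZ T F δ) / #F ≤ Cm m F * b := by
  obtain ⟨n₀, hn₀⟩ := eventually_atTop.1 (eventually_lt_of_limsup_lt
    ((limsup_le_htopZ T hδ).trans_lt hb) (by isBoundedDefault))
  refine ⟨n₀ + 1, fun F ⟨u, v, huv⟩ hF ↦ ?_⟩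
  have hF₀ : F.Nonempty := Finset.card_pos.1 (by omega)
  have hsub : F ⊆ Finset.Icc u v := huv ▸ Finset.subset_add_left F (by simp; omega)
  have hn : n₀ + 1 ≤ #(Finset.Icc u v) := hF.trans (Finset.card_le_card hsub)
  have hlog : Real.log (spaZ T F δ) ≤ #(Finset.Icc u v) * b :=
    calc Real.log (spaZ T F δ)
        ≤ Real.log (spaZ T (Finset.Icc 0 ((#(Finset.Icc u v) : ℤ) - 1)) δ) := by
          refine log_spaZ_le_log_spaZ T hδ (spaZ_le_spaZ_of_sub_mem T hδ (a := u) fun i hi ↦ ?_)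
          have := Finset.mem_Icc.1 (hsub hi)
          rw [Finset.mem_Icc, Int.card_Icc]
          omega
      _ ≤ #(Finset.Icc u v) * b := by
          have h := EReal.coe_lt_coe_iff.1 (hn₀ #(Finset.Icc u v) (by omega))
          rw [div_lt_iff₀' (mod_cast (by omega))] at h
          exact h.le
  rw [Cm, huv, div_mul_eq_mul_div]
  gcongr

theorem exists_Cm_mul_le_log_spaZ_div_card [CompactSpace X] [Nonempty X] (m : ℕ) {a : ℝ}
    (ha : a < htopZ T) :
    ∃ δ₀ > 0, ∀ δ, 0 < δ → δ ≤ δ₀ → ∀ F : Finset ℤ,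
      Cm m F * a ≤ Real.log (spaZ T F δ) / #F := by
  obtain ⟨ε, hε, hlower⟩ := exists_card_mul_le_log_spaZ T ha
  obtain ⟨δ₀, hδ₀, hunif⟩ := exists_forall_dist_le_mem_bowenRel T (Finset.Icc 0 ((m : ℤ) - 1)) hε
  refine ⟨δ₀, hδ₀, fun δ hδ hδδ₀ F ↦ ?_⟩
  have hspa := spaZ_add_le T (F := F) hδ fun x y hxy ↦ hunif x y (hxy.trans hδδ₀)
  rw [Cm, div_mul_eq_mul_div]
  gcongr
  exact (hlower _).trans (log_spaZ_le_log_spaZ T hε hspa)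

end Entropy

/-- Let `T` be a homeomorphism of a compact metric space with finite
topological entropy and fix `m ≥ 1`. For every `ε > 0` there are `δ ∈ (0,ε)` and `n₀` with:
(1) `(1/|F|) log spa(T,F,δ) ≤ C_m(F)·(h_top(T)+ε)` for every finite `F ⊆ ℤ` with
`m`-bounded gaps and `|F| ≥ n₀`; (2) `(1/|F|) log spa(T,F,δ) ≥ C_m(F)·(h_top(T)−ε)`
for every finite `F ⊆ ℤ`. -/
theorem stmt10 [CompactSpace X] [Nonempty X] (T : X ≃ₜ X) (m : ℕ) (hm : 1 ≤ m)
    (hfin : htopZ T < ⊤) (ε : ℝ) (hε : 0 < ε) :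
    ∃ δ : ℝ, 0 < δ ∧ δ < ε ∧ ∃ n₀ : ℕ,
      (∀ F : Finset ℤ, BoundedGaps m F → n₀ ≤ F.card →
        Real.log (spaZ T F δ) / (F.card : ℝ) ≤ Cm m F * ((htopZ T).toReal + ε)) ∧
      (∀ F : Finset ℤ,
        Cm m F * ((htopZ T).toReal - ε) ≤ Real.log (spaZ T F δ) / (F.card : ℝ)) := by
  have htop : ((htopZ T).toReal : EReal) = htopZ T :=
    EReal.coe_toReal hfin.ne (EReal.bot_lt_zero.trans_le (htopZ_nonneg T)).ne'
  have hupper : htopZ T < ((htopZ T).toReal + ε : ℝ) := by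
    rw [← htop, EReal.toReal_coe, EReal.coe_lt_coe_iff]
    exact lt_add_of_pos_right _ hε
  have hlower : (((htopZ T).toReal - ε : ℝ) : EReal) < htopZ T := by
    rw [← htop, EReal.toReal_coe, EReal.coe_lt_coe_iff]
    exact sub_lt_self _ hε
  obtain ⟨δ₀, hδ₀, hδ⟩ := exists_Cm_mul_le_log_spaZ_div_card T m hlower
  have hpos : 0 < min δ₀ (ε / 2) := lt_min hδ₀ (half_pos hε)
  obtain ⟨n₀, hn₀⟩ := exists_log_spaZ_div_card_le T hm hupper hpos
  exact ⟨min δ₀ (ε / 2), hpos, (min_le_right _ _).trans_lt (half_lt_self hε), n₀, hn₀,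
    hδ _ hpos (min_le_left _ _)⟩
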